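/- Let (X, Y) be bivariate normal with mean zero, unit variances, and correlation ρ ∈ [0, 1). Then for all w > 0, P(⌊X/w⌋ = ⌊Y/w⌋) ≥ P(⌊X/w⌋ = ⌊Y/w⌋ at ρ' ) whenever ρ ≥ ρ' ≥ 0; in particular, for any w > 0, P_w(ρ) ≥ P_w(0) = 2∑_{i=0}^∞(Φ((i+1)w) - Φ(iw))². -/

import Mathlib

open MeasureTheory ProbabilityTheory Real Set

/-- Standard normal density. -/
noncomputable def stdPdf (x : ℝ) : ℝ := (Real.sqrt (2 * Real.pi))⁻¹ * Real.exp (-x ^ 2 / 2)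

/-- Standard normal CDF. -/
noncomputable def Phi (x : ℝ) : ℝ := ∫ t in Set.Iic x, stdPdf t

/-!
Let `μ` be a centered Gaussian measure. The operators `U_ρ f x = 𝔼 f (ρ x + √(1 - ρ²) Y)`, `Y ∼ μ`,
form a symmetric Markov semigroup, `U_b U_c = U_{bc}`; both the symmetry and the semigroup law come
from the rotation invariance of `μ ⊗ μ`. For `ρ ≥ 0` and a pair `(X, Y)` with correlation `ρ`, this
gives `𝔼 f(X) f(Y) = ⟨f, U_ρ f⟩ = ‖U_{√ρ} f‖²`. When `ρ' ≤ ρ`, the operator `U_{√ρ'}` is `U_{√ρ}`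
followed by an `L²`-contraction, so `𝔼 f(X) f(Y)` is monotone in `ρ`. A collision probability is the
sum of these quantities over the indicators `f` of the cells of the quantizer.
-/

open scoped ENNReal NNReal

section General

theorem sq_lintegral_le_lintegral_sq {α : Type*} [MeasurableSpace α] (μ : Measure α)
    [IsProbabilityMeasure μ] {f : α → ℝ≥0∞} (hf : AEMeasurable f μ) :
    (∫⁻ x, f x ∂μ) ^ 2 ≤ ∫⁻ x, f x ^ 2 ∂μ := by
  have h : ∫⁻ x, f x ∂μ ≤ (∫⁻ x, f x ^ 2 ∂μ) ^ (1 / 2 : ℝ) := by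
    simpa [eLpNorm'] using
      eLpNorm'_le_eLpNorm'_of_exponent_le one_pos one_le_two μ hf.aestronglyMeasurable
  calc (∫⁻ x, f x ∂μ) ^ 2 ≤ ((∫⁻ x, f x ^ 2 ∂μ) ^ (1 / 2 : ℝ)) ^ 2 := by gcongr
    _ = ∫⁻ x, f x ^ 2 ∂μ := by rw [← ENNReal.rpow_natCast, ← ENNReal.rpow_mul]; simp

theorem measure_setOf_eq_eq_tsum {Ω κ : Type*} [MeasurableSpace Ω] [MeasurableSpace κ]
    [MeasurableSingletonClass κ] [Countable κ] (μ : Measure Ω) {X Y : Ω → κ}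
    (hX : Measurable X) (hY : Measurable Y) :
    μ {ω | X ω = Y ω} = ∑' k, μ (X ⁻¹' {k} ∩ Y ⁻¹' {k}) := by
  rw [← measure_iUnion]
  · congr 1
    ext ω
    simp [eq_comm]
  · exact fun i j hij ↦ Set.disjoint_left.2 fun ω hi hj ↦ hij (hi.1.symm.trans hj.1)
  · exact fun k ↦ (hX (measurableSet_singleton k)).inter (hY (measurableSet_singleton k))

theorem eq_two_mul_tsum_nat_of_hasSum_int {R : Type*} [DivisionRing R] [TopologicalSpace R]
    [IsTopologicalRing R] [T2Space R] {f : ℤ → R} {a : R} (hf : HasSum f a)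
    (hsymm : ∀ n : ℕ, f (-(n + 1)) = f n) : a = 2 * ∑' n : ℕ, f n := by
  rw [← tsum_mul_left, ← hf.nat_add_neg_add_one.tsum_eq]
  exact tsum_congr fun n ↦ by rw [hsymm, two_mul]

theorem measureReal_Ico_neg {α : Type*} [AddCommGroup α] [PartialOrder α] [IsOrderedAddMonoid α]
    [MeasurableSpace α] [MeasurableNeg α] (μ : Measure α) [μ.IsNegInvariant]
    [NullSingletonClass μ] (a b : α) :
    μ.real (Ico (-b) (-a)) = μ.real (Ico a b) := by
  rw [measureReal_congr Ico_ae_eq_Ioc, ← Set.neg_Ico, measureReal_def, Measure.measure_neg,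
    ← measureReal_def]

end General

section Mehler

variable {E : Type*} [NormedAddCommGroup E] [NormedSpace ℝ E] [MeasurableSpace E]

/-- The Ornstein–Uhlenbeck operator of correlation `ρ`, in Mehler's form
`f ↦ 𝔼 f (ρ x + √(1 - ρ²) Y)` with `Y ∼ μ`. It is defined on `ℝ≥0∞`-valued functions, so that no
integrability is required. -/
noncomputable def mehler (μ : Measure E) (ρ : ℝ) (f : E → ℝ≥0∞) (x : E) : ℝ≥0∞ :=
  ∫⁻ y, f (ρ • x + √(1 - ρ ^ 2) • y) ∂μ

theorem mehler_zero (μ : Measure E) (f : E → ℝ≥0∞) (x : E) : mehler μ 0 f x = ∫⁻ y, f y ∂μ := by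
  simp [mehler]

theorem mehler_one (μ : Measure E) [IsProbabilityMeasure μ] (ρ : ℝ) : mehler μ ρ 1 = 1 := by
  ext x
  simp [mehler]

variable [BorelSpace E] {f g : E → ℝ≥0∞}

theorem sq_mehler_le_mehler_sq (μ : Measure E) [IsProbabilityMeasure μ] (ρ : ℝ)
    (hf : Measurable f) (x : E) :
    mehler μ ρ f x ^ 2 ≤ mehler μ ρ (fun y ↦ f y ^ 2) x :=
  sq_lintegral_le_lintegral_sq μ (by fun_prop)

variable [SecondCountableTopology E]

@[fun_prop]
theorem measurable_mehler (μ : Measure E) [SFinite μ] (ρ : ℝ) (hf : Measurable f) :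
    Measurable (mehler μ ρ f) :=
  Measurable.lintegral_prod_right' (f := fun p : E × E ↦ f (ρ • p.1 + √(1 - ρ ^ 2) • p.2))
    (by fun_prop)

theorem lintegral_prod_mul_eq_lintegral_mul_mehler (μ : Measure E) [SFinite μ] (ρ : ℝ)
    (hg : Measurable g) (hf : Measurable f) :
    ∫⁻ p, g p.1 * f (ρ • p.1 + √(1 - ρ ^ 2) • p.2) ∂(μ.prod μ) =
      ∫⁻ x, g x * mehler μ ρ f x ∂μ := by
  rw [lintegral_prod _ (by fun_prop)]
  refine lintegral_congr fun x ↦ ?_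
  rw [mehler, ← lintegral_const_mul _ (by fun_prop)]

variable [CompleteSpace E] {μ : Measure E} [IsGaussian μ]

theorem measurePreserving_reflection_prod (hμ : μ[id] = 0) {a b : ℝ} (hab : a ^ 2 + b ^ 2 = 1) :
    MeasurePreserving (fun p : E × E ↦ (a • p.1 + b • p.2, b • p.1 - a • p.2))
      (μ.prod μ) (μ.prod μ) := by
  set z : ℂ := ⟨b, -a⟩
  have hz : ‖z‖ = 1 := by
    rw [Complex.norm_def, Complex.normSq_mk, Real.sqrt_eq_one]
    linear_combination hab
  have hcos : Real.cos z.arg = b := by simpa [hz] using Complex.norm_mul_cos_arg z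
  have hsin : Real.sin z.arg = -a := by simpa [hz] using Complex.norm_mul_sin_arg z
  have hrot : MeasurePreserving (ContinuousLinearMap.rotation z.arg) (μ.prod μ) (μ.prod μ) :=
    ⟨by fun_prop, IsGaussian.map_rotation_eq_self hμ _⟩
  convert! Measure.measurePreserving_swap.comp hrot using 2 with p
  simp [ContinuousLinearMap.rotation_apply, hcos, hsin, sub_eq_add_neg]

theorem map_smul_add_smul_prod (hμ : μ[id] = 0) (a b : ℝ) :
    (μ.prod μ).map (fun p : E × E ↦ a • p.1 + b • p.2) = μ.map (√(a ^ 2 + b ^ 2) • ·) := by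
  set z : ℂ := ⟨a, b⟩
  have hz : √(a ^ 2 + b ^ 2) = ‖z‖ := by
    rw [Complex.norm_def, Complex.normSq_mk, sq, sq]
  have hre : ‖z‖ * Real.cos z.arg = a := Complex.norm_mul_cos_arg z
  have him : ‖z‖ * Real.sin z.arg = b := Complex.norm_mul_sin_arg z
  have hrot : MeasurePreserving (ContinuousLinearMap.rotation z.arg) (μ.prod μ) (μ.prod μ) :=
    ⟨by fun_prop, IsGaussian.map_rotation_eq_self hμ _⟩
  conv_rhs => rw [hz, ← (measurePreserving_fst.comp hrot).map_eq,
    Measure.map_map (by fun_prop) (by fun_prop)]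
  congr 1
  ext p
  simp [ContinuousLinearMap.rotation_apply, smul_smul, hre, him]

theorem lintegral_mul_mehler_comm (hμ : μ[id] = 0) {ρ : ℝ} (hρ : ρ ^ 2 ≤ 1)
    (hg : Measurable g) (hf : Measurable f) :
    ∫⁻ x, g x * mehler μ ρ f x ∂μ = ∫⁻ x, f x * mehler μ ρ g x ∂μ := by
  set σ := √(1 - ρ ^ 2)
  have hσ : ρ ^ 2 + σ ^ 2 = 1 := by rw [sq_sqrt (by linarith)]; ring
  have hinv (p : E × E) : ρ • (ρ • p.1 + σ • p.2) + σ • (σ • p.1 - ρ • p.2) = p.1 := by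
    linear_combination (norm := module) hσ • p.1
  have hrefl := measurePreserving_reflection_prod hμ hσ
  rw [← lintegral_prod_mul_eq_lintegral_mul_mehler μ ρ hg hf,
    ← lintegral_prod_mul_eq_lintegral_mul_mehler μ ρ hf hg, ← hrefl.lintegral_comp (by fun_prop)]
  exact lintegral_congr fun p ↦ by rw [hinv, mul_comm]

theorem lintegral_mehler (hμ : μ[id] = 0) {ρ : ℝ} (hρ : ρ ^ 2 ≤ 1) (hf : Measurable f) :
    ∫⁻ x, mehler μ ρ f x ∂μ = ∫⁻ x, f x ∂μ := by
  simpa [mehler_one] using lintegral_mul_mehler_comm hμ hρ (measurable_one (α := ℝ≥0∞)) hf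

theorem mehler_mehler (hμ : μ[id] = 0) {b c : ℝ} (hb : b ^ 2 ≤ 1) (hc : c ^ 2 ≤ 1)
    (hf : Measurable f) (x : E) : mehler μ b (mehler μ c f) x = mehler μ (b * c) f x := by
  have hvar : (c * √(1 - b ^ 2)) ^ 2 + √(1 - c ^ 2) ^ 2 = 1 - (b * c) ^ 2 := by
    rw [mul_pow, sq_sqrt (by linarith), sq_sqrt (by linarith)]
    ring
  have hmap := map_smul_add_smul_prod hμ (c * √(1 - b ^ 2)) √(1 - c ^ 2)
  rw [hvar] at hmap
  calc mehler μ b (mehler μ c f) x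
      = ∫⁻ p, f ((b * c) • x + ((c * √(1 - b ^ 2)) • p.1 + √(1 - c ^ 2) • p.2)) ∂(μ.prod μ) := by
        rw [lintegral_prod _ (by fun_prop)]
        refine lintegral_congr fun y ↦ lintegral_congr fun z ↦ congrArg f ?_
        module
    _ = ∫⁻ z, f ((b * c) • x + z) ∂(μ.map (√(1 - (b * c) ^ 2) • ·)) := by
        rw [← hmap, lintegral_map (by fun_prop) (by fun_prop)]
    _ = mehler μ (b * c) f x := lintegral_map (by fun_prop) (by fun_prop)

theorem lintegral_mehler_sq_le (hμ : μ[id] = 0) {ρ : ℝ} (hρ : ρ ^ 2 ≤ 1) (hf : Measurable f) :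
    ∫⁻ x, mehler μ ρ f x ^ 2 ∂μ ≤ ∫⁻ x, f x ^ 2 ∂μ :=
  (lintegral_mono (sq_mehler_le_mehler_sq μ ρ hf)).trans_eq
    (lintegral_mehler hμ hρ (by fun_prop))

theorem lintegral_mul_mehler_self (hμ : μ[id] = 0) {ρ : ℝ} (hρ : ρ ∈ Icc 0 1)
    (hf : Measurable f) :
    ∫⁻ x, f x * mehler μ ρ f x ∂μ = ∫⁻ x, mehler μ √ρ f x ^ 2 ∂μ := by
  have hsq : √ρ ^ 2 ≤ 1 := (sq_sqrt hρ.1).trans_le hρ.2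
  calc ∫⁻ x, f x * mehler μ ρ f x ∂μ
      = ∫⁻ x, f x * mehler μ √ρ (mehler μ √ρ f) x ∂μ := by
        simp_rw [mehler_mehler hμ hsq hsq hf, mul_self_sqrt hρ.1]
    _ = ∫⁻ x, mehler μ √ρ f x ^ 2 ∂μ := by
        simp_rw [lintegral_mul_mehler_comm hμ hsq hf (measurable_mehler μ √ρ hf), sq]

theorem monotoneOn_lintegral_mul_mehler_self (hμ : μ[id] = 0) (hf : Measurable f) :
    MonotoneOn (fun ρ ↦ ∫⁻ x, f x * mehler μ ρ f x ∂μ) (Icc 0 1) := by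
  intro ρ' hρ' ρ hρ hle
  have hratio : √(ρ' / ρ) ^ 2 ≤ 1 := by
    rw [sq_sqrt (div_nonneg hρ'.1 hρ.1)]
    exact div_le_one_of_le₀ hle hρ.1
  have hfactor : √ρ' = √(ρ' / ρ) * √ρ := by
    rw [← sqrt_mul (div_nonneg hρ'.1 hρ.1), div_mul_cancel_of_imp]
    exact fun h ↦ le_antisymm (hle.trans_eq h) hρ'.1
  calc ∫⁻ x, f x * mehler μ ρ' f x ∂μ
      = ∫⁻ x, mehler μ √(ρ' / ρ) (mehler μ √ρ f) x ^ 2 ∂μ := by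
        simp_rw [lintegral_mul_mehler_self hμ hρ' hf, hfactor,
          mehler_mehler hμ hratio ((sq_sqrt hρ.1).trans_le hρ.2) hf]
    _ ≤ ∫⁻ x, mehler μ √ρ f x ^ 2 ∂μ := lintegral_mehler_sq_le hμ hratio (by fun_prop)
    _ = ∫⁻ x, f x * mehler μ ρ f x ∂μ := (lintegral_mul_mehler_self hμ hρ hf).symm

end Mehler

section Collision

variable {E κ : Type*} [NormedAddCommGroup E] [NormedSpace ℝ E] [MeasurableSpace E]

/-- The probability that a quantizer `q` sends two `μ`-distributed points of correlation `ρ` to the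
same cell. The pair is realised as `(X, ρ X + √(1 - ρ²) Y)` with `X` and `Y` independent. -/
noncomputable def collisionProb (μ : Measure E) (q : E → κ) (ρ : ℝ) : ℝ :=
  (μ.prod μ).real {p | q p.1 = q (ρ • p.1 + √(1 - ρ ^ 2) • p.2)}

variable [BorelSpace E] [SecondCountableTopology E] [MeasurableSpace κ]
  [MeasurableSingletonClass κ] [Countable κ] {q : E → κ}

theorem measure_collision_eq_tsum_lintegral (μ : Measure E) [SFinite μ] (hq : Measurable q)
    (ρ : ℝ) :
    (μ.prod μ) {p | q p.1 = q (ρ • p.1 + √(1 - ρ ^ 2) • p.2)} =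
      ∑' k, ∫⁻ x, (q ⁻¹' {k}).indicator 1 x * mehler μ ρ ((q ⁻¹' {k}).indicator 1) x ∂μ := by
  rw [measure_setOf_eq_eq_tsum (μ.prod μ) (by fun_prop) (by fun_prop)]
  refine tsum_congr fun k ↦ ?_
  have hcell : MeasurableSet (q ⁻¹' {k}) := hq (measurableSet_singleton k)
  have hind : Measurable ((q ⁻¹' {k}).indicator (1 : E → ℝ≥0∞)) := measurable_one.indicator hcell
  have hcells : MeasurableSet {p : E × E | q p.1 = k ∧ q (ρ • p.1 + √(1 - ρ ^ 2) • p.2) = k} :=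
    ((by fun_prop : Measurable fun p : E × E ↦ p.1) hcell).inter
      ((by fun_prop : Measurable fun p : E × E ↦ ρ • p.1 + √(1 - ρ ^ 2) • p.2) hcell)
  rw [← lintegral_prod_mul_eq_lintegral_mul_mehler μ ρ hind hind]
  exact (lintegral_indicator_one hcells).symm.trans
    (lintegral_congr fun p ↦ congrFun (inter_indicator_one (M₀ := ℝ≥0∞)) p)

theorem monotoneOn_collisionProb [CompleteSpace E] {μ : Measure E} [IsGaussian μ]
    (hμ : μ[id] = 0) (hq : Measurable q) : MonotoneOn (collisionProb μ q) (Icc 0 1) := by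
  refine fun ρ' hρ' ρ hρ hle ↦ ENNReal.toReal_mono (measure_ne_top _ _) ?_
  simp_rw [measure_collision_eq_tsum_lintegral μ hq]
  exact ENNReal.tsum_le_tsum fun k ↦ monotoneOn_lintegral_mul_mehler_self hμ
    (measurable_one.indicator (hq (measurableSet_singleton k))) hρ' hρ hle

theorem hasSum_collisionProb_zero (μ : Measure E) [IsFiniteMeasure μ] (hq : Measurable q) :
    HasSum (fun k ↦ μ.real (q ⁻¹' {k}) ^ 2) (collisionProb μ q 0) := by
  have hcell (k : κ) : MeasurableSet (q ⁻¹' {k}) := hq (measurableSet_singleton k)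
  have hsum := measure_collision_eq_tsum_lintegral μ hq 0
  simp_rw [mehler_zero, lintegral_mul_const _ (measurable_one.indicator (hcell _)),
    lintegral_indicator_one (hcell _), ← sq] at hsum
  have hfin : ∑' k, μ (q ⁻¹' {k}) ^ 2 ≠ ∞ := hsum ▸ measure_ne_top _ _
  simp_rw [collisionProb, measureReal_def, ← ENNReal.toReal_pow, hsum,
    ENNReal.tsum_toReal_eq (ENNReal.ne_top_of_tsum_ne_top hfin)]
  exact ENNReal.hasSum_toReal hfin

theorem stmt12_general [CompleteSpace E] {μ : Measure E} [IsGaussian μ] (hμ : μ[id] = 0)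
    (hq : Measurable q) :
    MonotoneOn (collisionProb μ q) (Icc 0 1) ∧
      HasSum (fun k ↦ μ.real (q ⁻¹' {k}) ^ 2) (collisionProb μ q 0) :=
  ⟨monotoneOn_collisionProb hμ hq, hasSum_collisionProb_zero μ hq⟩

end Collision

section StandardNormal

theorem Phi_eq_measureReal_Iic (x : ℝ) : Phi x = (gaussianReal 0 1).real (Iic x) := by
  rw [measureReal_def, gaussianReal_apply_eq_integral 0 one_ne_zero, ENNReal.toReal_ofReal
    (integral_nonneg fun t ↦ gaussianPDFReal_nonneg _ _ _)]
  simp [Phi, stdPdf, gaussianPDFReal]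

theorem measureReal_Ico_eq_Phi_sub {a b : ℝ} (h : a ≤ b) :
    (gaussianReal 0 1).real (Ico a b) = Phi b - Phi a := by
  have : NullSingletonClass (gaussianReal 0 1) := nullSingletonClass_gaussianReal one_ne_zero
  rw [measureReal_congr Ico_ae_eq_Ioc, Phi_eq_measureReal_Iic, Phi_eq_measureReal_Iic,
    ← Iic_sdiff_Iic, measureReal_sdiff (Iic_subset_Iic.2 h) measurableSet_Iic]

instance isNegInvariant_gaussianReal_zero (v : ℝ≥0) : (gaussianReal 0 v).IsNegInvariant :=
  ⟨by simpa using! gaussianReal_map_neg (μ := 0) (v := v)⟩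

theorem preimage_floor_div_singleton {w : ℝ} (hw : 0 < w) (k : ℤ) :
    (fun x : ℝ ↦ ⌊x / w⌋) ⁻¹' {k} = Ico (k * w) ((k + 1) * w) := by
  ext x
  simp [Int.floor_eq_iff, le_div_iff₀ hw, div_lt_iff₀ hw]

theorem eq_two_mul_tsum_Phi_of_hasSum_cells {w P : ℝ} (hw : 0 < w)
    (hP : HasSum (fun k : ℤ ↦ (gaussianReal 0 1).real ((fun x : ℝ ↦ ⌊x / w⌋) ⁻¹' {k}) ^ 2) P) :
    P = 2 * ∑' i : ℕ, (Phi ((i + 1) * w) - Phi (i * w)) ^ 2 := by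
  have : NullSingletonClass (gaussianReal 0 1) := nullSingletonClass_gaussianReal one_ne_zero
  simp_rw [preimage_floor_div_singleton hw] at hP
  have hcell (n : ℕ) : (gaussianReal 0 1).real (Ico ((n : ℤ) * w) (((n : ℤ) + 1) * w)) =
      Phi ((n + 1) * w) - Phi (n * w) := by
    rw [Int.cast_natCast, measureReal_Ico_eq_Phi_sub (by gcongr; linarith)]
  rw [eq_two_mul_tsum_nat_of_hasSum_int hP fun n ↦ ?_]
  · simp_rw [hcell]
  · rw [← measureReal_Ico_neg]
    congr 3 <;> push_cast <;> ring

end StandardNormal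

/-- The collision probability at correlation ρ dominates that at ρ' whenever
ρ ≥ ρ' ≥ 0; in particular it is at least its value at ρ = 0, which equals
2∑(Φ((i+1)w)-Φ(iw))². -/
theorem stmt12 (w : ℝ) (hw : 0 < w) :
    (∀ ρ ρ' : ℝ, ρ ∈ Set.Ico (0 : ℝ) 1 → ρ' ∈ Set.Ico (0 : ℝ) 1 → ρ' ≤ ρ →
      (((gaussianReal 0 1).prod (gaussianReal 0 1))
        {p : ℝ × ℝ | ⌊p.1 / w⌋ = ⌊(ρ' * p.1 + Real.sqrt (1 - ρ' ^ 2) * p.2) / w⌋}).toReal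
      ≤ (((gaussianReal 0 1).prod (gaussianReal 0 1))
        {p : ℝ × ℝ | ⌊p.1 / w⌋ = ⌊(ρ * p.1 + Real.sqrt (1 - ρ ^ 2) * p.2) / w⌋}).toReal) ∧
    (((gaussianReal 0 1).prod (gaussianReal 0 1))
        {p : ℝ × ℝ | ⌊p.1 / w⌋ = ⌊((0 : ℝ) * p.1 + Real.sqrt (1 - (0 : ℝ) ^ 2) * p.2) / w⌋}).toReal
      = 2 * ∑' i : ℕ, (Phi (((i : ℝ) + 1) * w) - Phi ((i : ℝ) * w)) ^ 2 := by
  have h := stmt12_general (q := fun x ↦ ⌊x / w⌋) (integral_id_gaussianReal (v := 1)) (by fun_prop)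
  exact ⟨fun ρ ρ' hρ hρ' ↦ h.1 (Ico_subset_Icc_self hρ') (Ico_subset_Icc_self hρ),
    eq_two_mul_tsum_Phi_of_hasSum_cells hw h.2⟩
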